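/- arXiv:1201.0282 — 2 statements merged into one kernel-verified Lean document; each statement's English description precedes it below -/
import Mathlib

section
/- 5 · 2^25 + 1 divides the Fermat number F_23 = 2^(2^23) + 1. -/
/-- Repeated squaring modulo `m`, starting from `2`. -/
def fermatResidue (m : ℕ) : ℕ → ℕ
  | 0 => 2
  | n + 1 => fermatResidue m n ^ 2 % m

theorem fermatResidue_modEq (m n : ℕ) : 2 ^ (2 ^ n) ≡ fermatResidue m n [MOD m] := by
  induction n with
  | zero => rfl
  | succ k ih =>
    rw [pow_succ, pow_mul]
    exact (ih.pow 2).trans (Nat.mod_modEq _ _).symm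

theorem dvd_of_fermatResidue (m n : ℕ) (h : m ∣ fermatResidue m n + 1) :
    m ∣ 2 ^ (2 ^ n) + 1 :=
  (((fermatResidue_modEq m n).add_right 1).dvd_iff dvd_rfl).2 h

theorem simerka_fermat_23 : (5 * 2 ^ 25 + 1 : ℕ) ∣ 2 ^ (2 ^ 23) + 1 := by
  apply dvd_of_fermatResidue
  norm_num [fermatResidue]
end

section
/- The class number h(-10079) equals 135, and since this is odd, 10079 is prime. -/
/-- The value of the binary quadratic form `(a,b,c)`, i.e. `a x² + b x y + c y²`. -/
def bqfVal (a b c x y : ℤ) : ℤ := a * x ^ 2 + b * x * y + c * y ^ 2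

/-- `SL₂(ℤ)`-equivalence of binary quadratic forms. -/
def bqfEquiv (a b c a' b' c' : ℤ) : Prop :=
  ∃ p q r s : ℤ, p * s - q * r = 1 ∧
    ∀ x y : ℤ, bqfVal a b c (p * x + q * y) (r * x + s * y) = bqfVal a' b' c' x y

/-- `(a,b,c)` is a primitive positive definite form of discriminant `Δ`. -/
def IsPosDefPrim (Δ a b c : ℤ) : Prop :=
  b ^ 2 - 4 * a * c = Δ ∧ 0 < a ∧ Int.gcd (Int.gcd a b) c = 1

/-- `cl` assigns to each primitive positive definite form of discriminant `Δ` an element of the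
commutative group `G`, in a way compatible with `SL₂(ℤ)`-equivalence, inverses, and Dirichlet
(Gauss) composition of united forms, and such that a form maps to the identity iff it
represents `1`.  Such a map realizes the form class group `Cl(Δ)` inside `G`. -/
structure IsFormClassMap (Δ : ℤ) {G : Type} [CommGroup G] (cl : ℤ → ℤ → ℤ → G) : Prop where
  equiv_eq : ∀ a b c a' b' c' : ℤ, IsPosDefPrim Δ a b c → IsPosDefPrim Δ a' b' c' →
    bqfEquiv a b c a' b' c' → cl a b c = cl a' b' c'
  inv_eq : ∀ a b c : ℤ, IsPosDefPrim Δ a b c → cl a (-b) c = (cl a b c)⁻¹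
  comp : ∀ a₁ a₂ b c : ℤ, IsPosDefPrim Δ a₁ b (a₂ * c) → IsPosDefPrim Δ a₂ b (a₁ * c) →
    IsPosDefPrim Δ (a₁ * a₂) b c →
    cl a₁ b (a₂ * c) * cl a₂ b (a₁ * c) = cl (a₁ * a₂) b c
  one_iff : ∀ a b c : ℤ, IsPosDefPrim Δ a b c →
    (cl a b c = 1 ↔ ∃ x y : ℤ, bqfVal a b c x y = 1)

/-- Gauss reduced forms of discriminant `-10079`. -/
def IsRed (a b c : ℤ) : Prop := -a < b ∧ b ≤ a ∧ a ≤ c ∧ (a = c → 0 ≤ b)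

theorem bqfEquiv_coeff {a b c a' b' c' p q r s : ℤ}
    (h : ∀ x y : ℤ, bqfVal a b c (p * x + q * y) (r * x + s * y) = bqfVal a' b' c' x y) :
    a' = a * p ^ 2 + b * p * r + c * r ^ 2 ∧
    b' = 2 * a * p * q + b * (p * s + q * r) + 2 * c * r * s ∧
    c' = a * q ^ 2 + b * q * s + c * s ^ 2 := by
  have h1 := h 1 0
  have h2 := h 0 1
  have h3 := h 1 1
  simp only [bqfVal] at h1 h2 h3
  refine ⟨by linarith, by linarith, by linarith⟩

theorem bqfEquiv_refl (a b c : ℤ) : bqfEquiv a b c a b c :=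
  ⟨1, 0, 0, 1, by norm_num, fun x y => by simp⟩

theorem bqfEquiv_symm {a b c a' b' c' : ℤ} (h : bqfEquiv a b c a' b' c') :
    bqfEquiv a' b' c' a b c := by
  obtain ⟨p, q, r, s, hd, h⟩ := h
  refine ⟨s, -q, -r, p, by linarith, fun x y => ?_⟩
  rw [← h]
  congr 1
  · linear_combination x * hd
  · linear_combination y * hd

theorem bqfEquiv_trans {a b c a' b' c' a'' b'' c'' : ℤ} (h : bqfEquiv a b c a' b' c')
    (h' : bqfEquiv a' b' c' a'' b'' c'') : bqfEquiv a b c a'' b'' c'' := by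
  obtain ⟨p, q, r, s, hd, h⟩ := h
  obtain ⟨p', q', r', s', hd', h'⟩ := h'
  refine ⟨p * p' + q * r', p * q' + q * s', r * p' + s * r', r * q' + s * s', ?_, fun x y => ?_⟩
  · linear_combination (p' * s' - q' * r') * hd + hd'
  · rw [← h', ← h]
    congr 1 <;> ring

theorem bqfEquiv_swap (a b c : ℤ) : bqfEquiv a b c c (-b) a :=
  ⟨0, -1, 1, 0, by norm_num, fun x y => by simp only [bqfVal]; ring⟩

theorem bqfEquiv_shift (a b c k : ℤ) :
    bqfEquiv a b c a (b + 2 * a * k) (a * k ^ 2 + b * k + c) :=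
  ⟨1, k, 0, 1, by norm_num, fun x y => by simp only [bqfVal]; ring⟩

theorem squarefree_disc (g : ℕ) (hg : g ^ 2 ∣ 10079) : g = 1 := by
  have hle : g ^ 2 ≤ 10079 := Nat.le_of_dvd (by norm_num) hg
  have : g ≤ 100 := by nlinarith
  interval_cases g <;> first | rfl | (exfalso; revert hg; norm_num)

/-- Every form of discriminant `-10079` is primitive. -/
theorem prim_of_disc {a b c : ℤ} (h : b ^ 2 - 4 * a * c = -10079) (ha : 0 < a) :
    IsPosDefPrim (-10079) a b c := by
  refine ⟨h, ha, squarefree_disc _ ?_⟩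
  set g := Int.gcd (Int.gcd a b) c with hg
  have h0 : (g : ℤ) ∣ (Int.gcd a b : ℤ) := Int.gcd_dvd_left ..
  have hc : (g : ℤ) ∣ c := Int.gcd_dvd_right ..
  obtain ⟨a', ha'⟩ : (g : ℤ) ∣ a := h0.trans (Int.gcd_dvd_left ..)
  obtain ⟨b', hb'⟩ : (g : ℤ) ∣ b := h0.trans (Int.gcd_dvd_right ..)
  obtain ⟨c', hc'⟩ := hc
  have : ((g ^ 2 : ℕ) : ℤ) ∣ ((10079 : ℕ) : ℤ) := by
    refine ⟨4 * a' * c' - b' ^ 2, ?_⟩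
    push_cast
    rw [ha', hb', hc'] at h
    linarith
  exact_mod_cast this

theorem exists_red (n : ℕ) : ∀ a b c : ℤ, a.toNat = n → 0 < a → b ^ 2 - 4 * a * c = -10079 →
    ∃ a' b' c' : ℤ, 0 < a' ∧ b' ^ 2 - 4 * a' * c' = -10079 ∧ IsRed a' b' c' ∧
      bqfEquiv a b c a' b' c' := by
  induction n using Nat.strong_induction_on with
  | _ n ih =>
    intro a b c hn ha hd
    obtain ⟨k, hk1, hk2⟩ : ∃ k : ℤ, -a < b + 2 * a * k ∧ b + 2 * a * k ≤ a := by
      refine ⟨-((b + a - 1) / (2 * a)), ?_⟩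
      have e := Int.emod_add_mul_ediv (b + a - 1) (2 * a)
      have l := Int.emod_nonneg (b + a - 1) (show (2 * a) ≠ 0 by omega)
      have u := Int.emod_lt_of_pos (b + a - 1) (show 0 < 2 * a by omega)
      constructor <;> linarith
    have hs := bqfEquiv_shift a b c k
    have hd' : (b + 2 * a * k) ^ 2 - 4 * a * (a * k ^ 2 + b * k + c) = -10079 := by
      linear_combination hd
    generalize b + 2 * a * k = B at *
    generalize a * k ^ 2 + b * k + c = C at *
    have hC : 0 < C := by
      by_contra hC
      nlinarith [sq_nonneg B]
    have hsw := bqfEquiv_trans hs (bqfEquiv_swap a B C)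
    have hdsw : (-B) ^ 2 - 4 * C * a = -10079 := by linear_combination hd'
    rcases lt_trichotomy C a with hlt | heq | hgt
    · obtain ⟨a', b', c', h1, h2, h3, h4⟩ := ih C.toNat (by omega) C (-B) a rfl hC hdsw
      exact ⟨a', b', c', h1, h2, h3, bqfEquiv_trans hsw h4⟩
    · by_cases hB : 0 ≤ B
      · exact ⟨a, B, C, ha, hd', ⟨hk1, hk2, heq.ge, fun _ => hB⟩, hs⟩
      · exact ⟨C, -B, a, hC, hdsw, ⟨by omega, by omega, heq.le, fun _ => by omega⟩, hsw⟩
    · exact ⟨a, B, C, ha, hd', ⟨hk1, hk2, hgt.le, fun h => by omega⟩, hs⟩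

theorem red_congr {a b b' k : ℤ} (ha : 0 < a) (h : b' = b + 2 * a * k) (h1 : -(2 * a) < b' - b)
    (h2 : b' - b < 2 * a) : b' = b := by
  have : k = 0 := by
    have k1 : k < 1 := by by_contra hk; nlinarith
    have k2 : -1 < k := by by_contra hk; nlinarith
    omega
  subst this; linarith

theorem red_unique_aux {a b c a' b' c' : ℤ} (ha : 0 < a) (ha' : 0 < a')
    (hd : b ^ 2 - 4 * a * c = -10079) (hd' : b' ^ 2 - 4 * a' * c' = -10079)
    (hr : IsRed a b c) (hr' : IsRed a' b' c') (h : bqfEquiv a b c a' b' c') (hle : a' ≤ a) :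
    a = a' ∧ b = b' ∧ c = c' := by
  obtain ⟨p, q, r, s, hdet, h⟩ := h
  obtain ⟨e1, e2, e3⟩ := bqfEquiv_coeff h
  obtain ⟨r1, r2, r3, r4⟩ := hr
  obtain ⟨s1, s2, s3, s4⟩ := hr'
  have fin : a = a' → b ^ 2 = b' ^ 2 → c = c' := by
    intro h1 h2
    subst h1
    have : (4 * a) * c = (4 * a) * c' := by linarith
    exact mul_left_cancel₀ (by omega) this
  by_cases hr0 : r = 0
  · subst hr0
    have hp : p ^ 2 = 1 := by
      have hu : IsUnit p := IsUnit.of_mul_eq_one s (by linarith)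
      rcases Int.isUnit_iff.1 hu with rfl | rfl <;> norm_num
    have haa : a = a' := by rw [e1, hp]; ring
    subst haa
    have hb : b' = b := red_congr ha (k := p * q) (by linear_combination e2 + b * hdet)
      (by linarith) (by linarith)
    subst hb
    exact ⟨rfl, rfl, fin rfl rfl⟩
  by_cases hp0 : p = 0
  · subst hp0
    have hr2 : r ^ 2 = 1 := by
      have hu : IsUnit r := IsUnit.of_mul_eq_one (-q) (by linarith)
      rcases Int.isUnit_iff.1 hu with rfl | rfl <;> norm_num
    have hac : a' = c := by rw [e1, hr2]; ring
    have hac' : a = c := by omega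
    have haa : a = a' := by omega
    subst haa
    subst hac
    have hb0 := r4 rfl
    have hb : b' = -b + 2 * a * (r * s) := by linear_combination e2 - b * hdet
    by_cases hba : b' = b
    · subst hba
      exact ⟨rfl, rfl, fin rfl rfl⟩
    · have hbn : b' = -b := by
        refine red_congr ha hb (by linarith) ?_
        rcases lt_or_eq_of_le s2 with hh | hh
        · linarith
        · rcases lt_or_eq_of_le r2 with hh' | hh'
          · linarith
          · omega
      have := fin rfl (by rw [hbn]; ring)
      have := s4 this
      exact absurd (by omega) hba
  exfalso
  have hbig : c ≤ b ∨ c ≤ -b := by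
    have key : a * p ^ 2 + b * p * r + c * r ^ 2 ≤ a := by linarith
    have hp1 : 1 ≤ p ^ 2 := by have := sq_pos_of_ne_zero hp0; omega
    have hr1 : 1 ≤ r ^ 2 := by have := sq_pos_of_ne_zero hr0; omega
    by_contra hcon
    push Not at hcon
    obtain ⟨hc1, hc2⟩ := hcon
    have hab : |b| ≤ a := abs_le.2 ⟨by linarith, r2⟩
    have hcb : |b| < c := abs_lt.2 ⟨by linarith, hc1⟩
    have hP : 1 ≤ |p| := Int.one_le_abs hp0
    have hR : 1 ≤ |r| := Int.one_le_abs hr0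
    have hbpr : -(|b| * |p| * |r|) ≤ b * p * r := by
      rw [← abs_mul, ← abs_mul]; exact neg_abs_le _
    rw [← sq_abs p, ← sq_abs r] at key
    have hB : 0 ≤ |b| := abs_nonneg b
    generalize |p| = P at *
    generalize |r| = R at *
    generalize |b| = B at *
    -- `a(P²-1) + c R² ≤ B P R`
    have t1 : B * (P ^ 2 - 1) ≤ a * (P ^ 2 - 1) := mul_le_mul_of_nonneg_right hab (by nlinarith)
    have t2 : B * R ^ 2 < c * R ^ 2 := mul_lt_mul_of_pos_right hcb (by positivity)
    have t3 : 0 ≤ B * (P ^ 2 - 1 + R ^ 2 - P * R) :=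
      mul_nonneg hB (by nlinarith [sq_nonneg (P - R), mul_nonneg (sub_nonneg.2 hP) (sub_nonneg.2 hR)])
    nlinarith
  have h3 : b = a ∧ c = a := by omega
  obtain ⟨rfl, rfl⟩ := h3
  have : 3 * c ^ 2 = 10079 := by linarith
  omega

theorem red_unique {a b c a' b' c' : ℤ} (ha : 0 < a) (ha' : 0 < a')
    (hd : b ^ 2 - 4 * a * c = -10079) (hd' : b' ^ 2 - 4 * a' * c' = -10079)
    (hr : IsRed a b c) (hr' : IsRed a' b' c') (h : bqfEquiv a b c a' b' c') :
    a = a' ∧ b = b' ∧ c = c' := by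
  rcases le_total a' a with hle | hle
  · exact red_unique_aux ha ha' hd hd' hr hr' h hle
  · obtain ⟨h1, h2, h3⟩ := red_unique_aux ha' ha hd' hd hr' hr (bqfEquiv_symm h) hle
    exact ⟨h1.symm, h2.symm, h3.symm⟩

/-- The third coefficient of a form of discriminant `-10079`. -/
@[irreducible] def cOf (a b : ℤ) : ℤ := (b ^ 2 + 10079) / (4 * a)

/-- The reducedness condition, for `(a, b + a) = (m, n)`. -/
abbrev redPred (m n : ℕ) : Prop :=
    0 < m ∧ 0 < n ∧ n ≤ 2 * m ∧
    (n * n + m * m + 10079 - 2 * m * n) % (4 * m) = 0 ∧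
    ((n : ℤ) - m) ^ 2 - 4 * m * cOf m ((n : ℤ) - m) = -10079 ∧
    (m : ℤ) ≤ cOf m ((n : ℤ) - m) ∧
    ((m : ℤ) = cOf m ((n : ℤ) - m) → m ≤ n)

/-- The reduced forms, indexed by `(a, b + a)` with natural number entries. -/
def redBox (A B : ℕ) : Finset (ℕ × ℕ) :=
  (Finset.range A ×ˢ Finset.range B).filter (fun t => redPred t.1 t.2)

theorem mem_box_iff (A B m n : ℕ) :
    (m, n) ∈ redBox A B ↔
      (m < A ∧ n < B) ∧ redPred m n := by
  rw [redBox, Finset.mem_filter, Finset.mem_product, Finset.mem_range, Finset.mem_range]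

/-- The reduced forms. -/
@[irreducible] def redSet : Finset (ℕ × ℕ) := redBox 58 116

theorem redSet_eq : redSet = redBox 58 116 := by
  unfold redSet
  rfl

theorem mem_redSet_iff (m n : ℕ) :
    (m, n) ∈ redSet ↔ (m < 58 ∧ n < 116) ∧ redPred m n :=
  redSet_eq ▸ mem_box_iff 58 116 m n

theorem redSet_card : redSet.card = 135 := by
  decide +kernel

theorem redSet_spec {t : ℕ × ℕ} (ht : t ∈ redSet) :
    0 < (t.1 : ℤ) ∧ ((t.2 : ℤ) - t.1) ^ 2 -
      4 * t.1 * (cOf t.1 ((t.2 : ℤ) - t.1)) = -10079 ∧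
    IsRed t.1 ((t.2 : ℤ) - t.1) (cOf t.1 ((t.2 : ℤ) - t.1)) := by
  obtain ⟨m, n⟩ := t
  replace ht := (mem_redSet_iff m n).1 ht
  dsimp only
  obtain ⟨-, h1, h2, h3, -, h4, h5, h6⟩ := ht
  refine ⟨by omega, ?_, by omega, by omega, h5, fun h => by have := h6 h; omega⟩
  exact h4

theorem redSet_prim {t : ℕ × ℕ} (ht : t ∈ redSet) :
    IsPosDefPrim (-10079) t.1 ((t.2 : ℤ) - t.1)
      (cOf t.1 ((t.2 : ℤ) - t.1)) :=
  prim_of_disc (redSet_spec ht).2.1 (redSet_spec ht).1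

theorem mem_redSet {a b c : ℤ} (ha : 0 < a) (hd : b ^ 2 - 4 * a * c = -10079)
    (hr : IsRed a b c) : (a.toNat, (b + a).toNat) ∈ redSet ∧
      cOf a b = c := by
  obtain ⟨r1, r2, r3, r4⟩ := hr
  have hc : b ^ 2 + 10079 = (4 * a) * c := by linarith
  have hq : cOf a b = c := by
    rw [cOf, hc]; exact Int.mul_ediv_cancel_left _ (by omega)
  refine ⟨?_, hq⟩
  have ha58 : a < 58 := by
    by_contra hh
    nlinarith [mul_nonneg (show 0 ≤ a - b by linarith) (show 0 ≤ a + b by linarith)]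
  have e1 : ((a.toNat : ℕ) : ℤ) = a := Int.toNat_of_nonneg ha.le
  have e2 : (((b + a).toNat : ℕ) : ℤ) = b + a := Int.toNat_of_nonneg (by omega)
  rw [mem_redSet_iff, redPred]
  have e3 : b + a - a = b := by ring
  rw [e1, e2, e3, hq]
  refine ⟨⟨by omega, by omega⟩, by omega, by omega, by omega, ?_, ?_, r3, fun h => ?_⟩
  · obtain ⟨c', hc'⟩ := Int.eq_ofNat_of_zero_le (show 0 ≤ c by omega)
    generalize a.toNat = m at *
    generalize (b + a).toNat = n at *
    have hN : n * n + m * m + 10079 = 4 * m * c' + 2 * m * n := by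
      zify
      rw [e1, e2, ← hc']
      linear_combination hc
    rw [hN, Nat.add_sub_cancel]
    exact Nat.mul_mod_right _ _
  · exact hd
  · have := r4 h; omega

/-- The class of a reduced form. -/
def redClass (t : {t : ℕ × ℕ // t ∈ redSet}) :
    Quot (fun f g : {f : ℤ × ℤ × ℤ // IsPosDefPrim (-10079) f.1 f.2.1 f.2.2} =>
      bqfEquiv f.1.1 f.1.2.1 f.1.2.2 g.1.1 g.1.2.1 g.1.2.2) :=
  Quot.mk _ ⟨((t.1.1 : ℤ), (t.1.2 : ℤ) - t.1.1,
    cOf t.1.1 ((t.1.2 : ℤ) - t.1.1)),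
    redSet_prim t.2⟩

theorem redClass_bij : Function.Bijective redClass := by
  constructor
  · intro t u htu
    have he : Equivalence (fun f g : {f : ℤ × ℤ × ℤ // IsPosDefPrim (-10079) f.1 f.2.1 f.2.2} =>
      bqfEquiv f.1.1 f.1.2.1 f.1.2.2 g.1.1 g.1.2.1 g.1.2.2) :=
      ⟨fun _ => bqfEquiv_refl _ _ _, fun h => bqfEquiv_symm h, fun h h' => bqfEquiv_trans h h'⟩
    have h := he.eqvGen_iff.1 (Quot.eqvGen_exact htu)
    obtain ⟨t1, t2, t3⟩ := redSet_spec t.2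
    obtain ⟨u1, u2, u3⟩ := redSet_spec u.2
    obtain ⟨h1, h2, -⟩ := red_unique t1 u1 t2 u2 t3 u3 h
    apply Subtype.ext
    apply Prod.ext <;> omega
  · intro x
    induction x using Quot.ind with
    | _ f =>
      obtain ⟨⟨a, b, c⟩, hd, ha, hg⟩ := f
      obtain ⟨a', b', c', h1, h2, h3, h4⟩ := exists_red _ a b c rfl ha hd
      obtain ⟨m1, m2⟩ := mem_redSet h1 h2 h3
      refine ⟨⟨_, m1⟩, ?_⟩
      refine Quot.sound (bqfEquiv_symm ?_)
      have e1 : ((a'.toNat : ℕ) : ℤ) = a' := Int.toNat_of_nonneg h1.le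
      have e2 : (((b' + a').toNat : ℕ) : ℤ) = b' + a' := Int.toNat_of_nonneg (by have := h3.1; omega)
      have e3 : b' + a' - a' = b' := by ring
      simp only [e1, e2, e3, m2]
      exact h4

theorem class_number_10079 :
    Nat.card (Quot (fun f g : {f : ℤ × ℤ × ℤ // IsPosDefPrim (-10079) f.1 f.2.1 f.2.2} =>
      bqfEquiv f.1.1 f.1.2.1 f.1.2.2 g.1.1 g.1.2.1 g.1.2.2)) = 135 ∧
    Odd 135 ∧ Nat.Prime 10079 := by
  refine ⟨?_, by decide, by norm_num⟩
  rw [← Nat.card_eq_of_bijective redClass redClass_bij, Nat.card_eq_fintype_card,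
    Fintype.card_coe, redSet_card]
end
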